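/- Suppose 0 ≤ R ≤ C(supp(Q₀)), and that for every ℓ ≥ 0 the pair (T̆_ℓ,V̆_ℓ) attains the infimum defining E_c(R,Q_ℓ) and Q_{ℓ+1}(x) = ∑_y T̆_ℓ(y)V̆_ℓ(x|y). Then for every ℓ, E_c(R,Q_ℓ) = E_c^{ML}(R,Q_ℓ) and the pair (T̆_ℓ,V̆_ℓ) also attains the minimum defining E_c^{ML}(R,Q_ℓ). -/

import Mathlib

/-!
Write `W = T∘V`, `D = D(W‖Q∘P)` and `g(W) = D − D(W‖T×Q) = ∑ W log (T/P)`. The function `g` is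
convex in `W` and does not involve `Q`, and the objective of `E_c^{ML}` is `max (D, g + R)`, while
feasibility for `E_c` reads `D − g ≥ R`.

For one `Q` the two exponents agree as soon as some `W*`, absolutely continuous with respect to
`Q∘P`, has `g(W*) ≤ −R`. Indeed `D ≥ 0` makes `W*` feasible and forces `g(W) > −R` for every
infeasible `W`; on the segment from `W` to `W*` there is by continuity a point with `D − g = R`, and
there `D = g + R ≤ g(W) + R` by convexity (`exists_feasible`, `Ec_le_EcML`).

For `Q₀` the joint law of the capacity-achieving input on `supp Q₀` serves as `W*`, because
`g(Q'∘P) = −I(Q'∘P)` (`exists_start`). The iteration may shrink the support, but the existence of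
`W*` persists (`start_step`): the optimal `W` is supported in its own marginal `Q_{ℓ+1}`, so it
serves if `g(W) ≤ −R`. If `g(W) > −R`, the marginal has the full support of `Q_ℓ`, so the
previous `W*` still serves; a missing letter would allow a step decreasing both `g` and `D`, as `D`
has slope `−∞` in the direction of a new letter (`full_support`).
-/

open scoped BigOperators
open Filter Topology

/-- `f` is a probability mass function on a finite alphabet. -/
def IsPMF {α : Type*} [Fintype α] (f : α → ℝ) : Prop :=
  (∀ a, 0 ≤ f a) ∧ ∑ a, f a = 1

/-- `P` is a discrete memoryless channel from `𝓧` to `𝓨`. -/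
def IsChannel {𝓧 𝓨 : Type*} [Fintype 𝓧] [Fintype 𝓨] (P : 𝓧 → 𝓨 → ℝ) : Prop :=
  ∀ x, IsPMF (P x)

/-- `V` is a conditional pmf on `𝓧` given `𝓨`. -/
def IsCondPMF {𝓧 𝓨 : Type*} [Fintype 𝓧] [Fintype 𝓨] (V : 𝓨 → 𝓧 → ℝ) : Prop :=
  ∀ y, IsPMF (V y)

/-- one term `s·log(s/t)` of a KL divergence, with the conventions
    `0·log(0/t) = 0` and `s·log(s/0) = +∞` for `s > 0`. -/
noncomputable def klTerm (s t : ℝ) : EReal :=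
  if s = 0 then 0 else if t = 0 then ⊤ else ((s * Real.log (s / t) : ℝ) : EReal)

/-- `D(T∘V ‖ Q∘P)`. -/
noncomputable def DQP {𝓧 𝓨 : Type*} [Fintype 𝓧] [Fintype 𝓨]
    (T : 𝓨 → ℝ) (V : 𝓨 → 𝓧 → ℝ) (Q : 𝓧 → ℝ) (P : 𝓧 → 𝓨 → ℝ) : EReal :=
  ∑ y, ∑ x, klTerm (T y * V y x) (Q x * P x y)

/-- `D(T∘V ‖ T×Q)`. -/
noncomputable def DTQ {𝓧 𝓨 : Type*} [Fintype 𝓧] [Fintype 𝓨]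
    (T : 𝓨 → ℝ) (V : 𝓨 → 𝓧 → ℝ) (Q : 𝓧 → ℝ) : EReal :=
  ∑ y, ∑ x, klTerm (T y * V y x) (T y * Q x)

/-- Gallager's function `E₀(ρ,Q)` (for `ρ > −1`). -/
noncomputable def E0 {𝓧 𝓨 : Type*} [Fintype 𝓧] [Fintype 𝓨]
    (ρ : ℝ) (Q : 𝓧 → ℝ) (P : 𝓧 → 𝓨 → ℝ) : ℝ :=
  - Real.log (∑ y, (∑ x, Q x * P x y ^ (1 / (1 + ρ))) ^ (1 + ρ))

/-- The joint distribution `T_ρ∘V_ρ` on `𝓧 × 𝓨` (for `ρ > −1`). -/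
noncomputable def Jrho {𝓧 𝓨 : Type*} [Fintype 𝓧] [Fintype 𝓨]
    (ρ : ℝ) (Q : 𝓧 → ℝ) (P : 𝓧 → 𝓨 → ℝ) (x : 𝓧) (y : 𝓨) : ℝ :=
  Q x * P x y ^ (1 / (1 + ρ)) * (∑ a, Q a * P a y ^ (1 / (1 + ρ))) ^ ρ /
    ∑ y', (∑ a, Q a * P a y' ^ (1 / (1 + ρ))) ^ (1 + ρ)

/-- `max_{x : Q(x) > 0} P(y|x)`. -/
noncomputable def maxP {𝓧 𝓨 : Type*} (Q : 𝓧 → ℝ) (P : 𝓧 → 𝓨 → ℝ) (y : 𝓨) : ℝ :=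
  ⨆ x : {x // 0 < Q x}, P x.1 y

/-- `E₀(−1,Q) = −log ∑_y max_{x : Q(x)>0} P(y|x)`. -/
noncomputable def E0m1 {𝓧 𝓨 : Type*} [Fintype 𝓧] [Fintype 𝓨]
    (Q : 𝓧 → ℝ) (P : 𝓧 → 𝓨 → ℝ) : ℝ :=
  - Real.log (∑ y, maxP Q P y)

/-- `E₀(ρ,Q)` extended to `ρ = −1`. -/
noncomputable def E0full {𝓧 𝓨 : Type*} [Fintype 𝓧] [Fintype 𝓨]
    (ρ : ℝ) (Q : 𝓧 → ℝ) (P : 𝓧 → 𝓨 → ℝ) : ℝ :=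
  if ρ = -1 then E0m1 Q P else E0 ρ Q P

/-- `T_{−1}(y) ∝ max_{a : Q(a)>0} P(y|a)`. -/
noncomputable def Tm1 {𝓧 𝓨 : Type*} [Fintype 𝓧] [Fintype 𝓨]
    (Q : 𝓧 → ℝ) (P : 𝓧 → 𝓨 → ℝ) (y : 𝓨) : ℝ :=
  maxP Q P y / ∑ y', maxP Q P y'

/-- `V` is admissible at `ρ = −1`: `V(x|y) = 0` for every `x` outside
    `argmax_{a : Q(a)>0} P(y|a)`. -/
def AdmissibleAtM1 {𝓧 𝓨 : Type*} [Fintype 𝓧] [Fintype 𝓨]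
    (Q : 𝓧 → ℝ) (P : 𝓧 → 𝓨 → ℝ) (V : 𝓨 → 𝓧 → ℝ) : Prop :=
  ∀ y x, ¬ (0 < Q x ∧ ∀ a, 0 < Q a → P a y ≤ P x y) → V y x = 0

/-- the error exponent `E_e(R,Q)`. -/
noncomputable def Ee {𝓧 𝓨 : Type*} [Fintype 𝓧] [Fintype 𝓨]
    (R : ℝ) (Q : 𝓧 → ℝ) (P : 𝓧 → 𝓨 → ℝ) : EReal :=
  sInf {v | ∃ T : 𝓨 → ℝ, ∃ V : 𝓨 → 𝓧 → ℝ, IsPMF T ∧ IsCondPMF V ∧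
    v = DQP T V Q P + max (DTQ T V Q - (R : EReal)) 0}

/-- the ML correct-decoding exponent `E_c^{ML}(R,Q)`. -/
noncomputable def EcML {𝓧 𝓨 : Type*} [Fintype 𝓧] [Fintype 𝓨]
    (R : ℝ) (Q : 𝓧 → ℝ) (P : 𝓧 → 𝓨 → ℝ) : EReal :=
  sInf {v | ∃ T : 𝓨 → ℝ, ∃ V : 𝓨 → 𝓧 → ℝ, IsPMF T ∧ IsCondPMF V ∧
    v = DQP T V Q P + max ((R : EReal) - DTQ T V Q) 0}

/-- the strict correct-decoding exponent `E_c(R,Q)` (`+∞` if infeasible). -/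
noncomputable def Ec {𝓧 𝓨 : Type*} [Fintype 𝓧] [Fintype 𝓨]
    (R : ℝ) (Q : 𝓧 → ℝ) (P : 𝓧 → 𝓨 → ℝ) : EReal :=
  sInf {v | ∃ T : 𝓨 → ℝ, ∃ V : 𝓨 → 𝓧 → ℝ, IsPMF T ∧ IsCondPMF V ∧
    (R : EReal) ≤ DTQ T V Q ∧ v = DQP T V Q P}

/-- the mutual information `I(Q∘P)`. -/
noncomputable def MI {𝓧 𝓨 : Type*} [Fintype 𝓧] [Fintype 𝓨]
    (Q : 𝓧 → ℝ) (P : 𝓧 → 𝓨 → ℝ) : ℝ :=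
  ∑ x, ∑ y, if Q x * P x y = 0 then 0
    else Q x * P x y * Real.log (P x y / ∑ a, Q a * P a y)

/-- the capacity `C(Z)` of the channel restricted to input letters in `Z`. -/
noncomputable def capacity {𝓧 𝓨 : Type*} [Fintype 𝓧] [Fintype 𝓨]
    (P : 𝓧 → 𝓨 → ℝ) (Z : Set 𝓧) : ℝ :=
  sSup {c | ∃ Q' : 𝓧 → ℝ, IsPMF Q' ∧ (∀ x, 0 < Q' x → x ∈ Z) ∧ c = MI Q' P}

/-- `R_{−1}^{−}(Q)`. -/
noncomputable def Rm1minus {𝓧 𝓨 : Type*} [Fintype 𝓧] [Fintype 𝓨]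
    (Q : 𝓧 → ℝ) (P : 𝓧 → 𝓨 → ℝ) : EReal :=
  sInf {v | ∃ V : 𝓨 → 𝓧 → ℝ, IsCondPMF V ∧ AdmissibleAtM1 Q P V ∧
    v = DTQ (Tm1 Q P) V Q}

/-- `R_{−1}^{+}(Q)`. -/
noncomputable def Rm1plus {𝓧 𝓨 : Type*} [Fintype 𝓧] [Fintype 𝓨]
    (Q : 𝓧 → ℝ) (P : 𝓧 → 𝓨 → ℝ) : EReal :=
  sSup {v | ∃ V : 𝓨 → 𝓧 → ℝ, IsCondPMF V ∧ AdmissibleAtM1 Q P V ∧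
    v = DTQ (Tm1 Q P) V Q}

/-- `F_ρ(T∘V, Q) = D(T∘V‖Q∘P) + ρ·D(T∘V‖T×Q)`. -/
noncomputable def Frho {𝓧 𝓨 : Type*} [Fintype 𝓧] [Fintype 𝓨]
    (ρ : ℝ) (T : 𝓨 → ℝ) (V : 𝓨 → 𝓧 → ℝ) (Q : 𝓧 → ℝ) (P : 𝓧 → 𝓨 → ℝ) : EReal :=
  DQP T V Q P + (ρ : EReal) * DTQ T V Q

/-- the unconstrained penalized minimum
    `min_{T,V} { D(T∘V‖Q∘P) + ρ·(D(T∘V‖T×Q) − R) }`. -/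
noncomputable def penMin {𝓧 𝓨 : Type*} [Fintype 𝓧] [Fintype 𝓨]
    (Q : 𝓧 → ℝ) (P : 𝓧 → 𝓨 → ℝ) (R ρ : ℝ) : EReal :=
  sInf {v | ∃ T : 𝓨 → ℝ, ∃ V : 𝓨 → 𝓧 → ℝ, IsPMF T ∧ IsCondPMF V ∧
    v = DQP T V Q P + (ρ : EReal) * (DTQ T V Q - (R : EReal))}

/-- the support-constrained penalized minimum
    `min_{T,V : supp(V) ⊆ supp(Q)} { D(T∘V‖Q∘P) − ρ·(R − D(T∘V‖T×Q)) }`. -/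
noncomputable def penMinS {𝓧 𝓨 : Type*} [Fintype 𝓧] [Fintype 𝓨]
    (Q : 𝓧 → ℝ) (P : 𝓧 → 𝓨 → ℝ) (R ρ : ℝ) : EReal :=
  sInf {v | ∃ T : 𝓨 → ℝ, ∃ V : 𝓨 → 𝓧 → ℝ, IsPMF T ∧ IsCondPMF V ∧
    (∀ y x, Q x = 0 → V y x = 0) ∧
    v = DQP T V Q P - (ρ : EReal) * ((R : EReal) - DTQ T V Q)}

/-! ### Divergences as real functions of the joint distribution -/

/-- `W y x` is a joint pmf on `𝓨 × 𝓧` absolutely continuous with respect to `Q∘P`; these are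
exactly the joint distributions for which `D(T∘V‖Q∘P)` is finite. -/
def Adm {𝓧 𝓨 : Type*} [Fintype 𝓧] [Fintype 𝓨] (Q : 𝓧 → ℝ) (P : 𝓧 → 𝓨 → ℝ)
    (W : 𝓨 → 𝓧 → ℝ) : Prop :=
  (∀ y x, 0 ≤ W y x) ∧ ∑ y, ∑ x, W y x = 1 ∧ ∀ y x, W y x ≠ 0 → Q x ≠ 0 ∧ P x y ≠ 0

/-- `D(W‖Q∘P)` as a real number (meaningful for `W` satisfying `Adm Q P`), written so that
continuity and convexity in `W` come from those of `s ↦ s log s`. -/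
noncomputable def dJ {𝓧 𝓨 : Type*} [Fintype 𝓧] [Fintype 𝓨] (Q : 𝓧 → ℝ) (P : 𝓧 → 𝓨 → ℝ)
    (W : 𝓨 → 𝓧 → ℝ) : ℝ :=
  ∑ y, ∑ x, (W y x * Real.log (W y x) - W y x * Real.log (Q x * P x y))

/-- The difference `D(W‖Q∘P) − D(W‖T×Q) = ∑ W(y,x) log (T(y)/P(y|x))`, where `T` is the
`𝓨`-marginal of `W`. It does not depend on `Q` and is convex in `W`. -/
noncomputable def gJ {𝓧 𝓨 : Type*} [Fintype 𝓧] [Fintype 𝓨] (P : 𝓧 → 𝓨 → ℝ)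
    (W : 𝓨 → 𝓧 → ℝ) : ℝ :=
  ∑ y, ((∑ x, W y x) * Real.log (∑ x, W y x) - ∑ x, W y x * Real.log (P x y))

/-- The point at parameter `t` on the segment from `W` to `U`. -/
def mixJ {𝓧 𝓨 : Type*} (t : ℝ) (W U : 𝓨 → 𝓧 → ℝ) : 𝓨 → 𝓧 → ℝ :=
  fun y x => (1 - t) * W y x + t * U y x

lemma continuous_mixJ {𝓧 𝓨 : Type*} (W U : 𝓨 → 𝓧 → ℝ) : Continuous fun t : ℝ => mixJ t W U := by
  unfold mixJ
  fun_prop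

section Aux

variable {𝓧 𝓨 : Type*} [Fintype 𝓧] [Fintype 𝓨]

lemma mul_log_mix {a b t : ℝ} (ha : 0 ≤ a) (hb : 0 ≤ b) (h0 : 0 ≤ t) (h1 : t ≤ 1) :
    ((1 - t) * a + t * b) * Real.log ((1 - t) * a + t * b)
      ≤ (1 - t) * (a * Real.log a) + t * (b * Real.log b) := by
  have h := Real.convexOn_mul_log.2 (Set.mem_Ici.2 ha) (Set.mem_Ici.2 hb)
    (sub_nonneg.2 h1) h0 (by ring)
  simpa [smul_eq_mul] using h

lemma Adm.mix {Q : 𝓧 → ℝ} {P : 𝓧 → 𝓨 → ℝ} {W U : 𝓨 → 𝓧 → ℝ} (hW : Adm Q P W)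
    (hU : Adm Q P U) {t : ℝ} (h0 : 0 ≤ t) (h1 : t ≤ 1) : Adm Q P (mixJ t W U) := by
  refine ⟨fun y x => ?_, ?_, fun y x h => ?_⟩
  · exact add_nonneg (mul_nonneg (sub_nonneg.2 h1) (hW.1 y x)) (mul_nonneg h0 (hU.1 y x))
  · simp only [mixJ, Finset.sum_add_distrib, ← Finset.mul_sum, hW.2.1, hU.2.1]
    ring
  · by_cases hw : W y x = 0
    · by_cases hu : U y x = 0
      · simp [mixJ, hw, hu] at h
      · exact hU.2.2 y x hu
    · exact hW.2.2 y x hw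

lemma gJ_mix_le {P : 𝓧 → 𝓨 → ℝ} {W U : 𝓨 → 𝓧 → ℝ} (hW : ∀ y x, 0 ≤ W y x)
    (hU : ∀ y x, 0 ≤ U y x) {t : ℝ} (h0 : 0 ≤ t) (h1 : t ≤ 1) :
    gJ P (mixJ t W U) ≤ (1 - t) * gJ P W + t * gJ P U := by
  unfold gJ
  rw [Finset.mul_sum, Finset.mul_sum, ← Finset.sum_add_distrib]
  refine Finset.sum_le_sum fun y _ => ?_
  have e1 : ∑ x, mixJ t W U y x = (1 - t) * ∑ x, W y x + t * ∑ x, U y x := by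
    simp only [mixJ, Finset.sum_add_distrib, Finset.mul_sum]
  have e2 : ∑ x, mixJ t W U y x * Real.log (P x y)
      = (1 - t) * ∑ x, W y x * Real.log (P x y) + t * ∑ x, U y x * Real.log (P x y) := by
    simp only [mixJ, Finset.mul_sum, ← Finset.sum_add_distrib]
    exact Finset.sum_congr rfl fun x _ => by ring
  rw [e1, e2]
  have := mul_log_mix (Finset.sum_nonneg fun x (_ : x ∈ Finset.univ) => hW y x)
    (Finset.sum_nonneg fun x (_ : x ∈ Finset.univ) => hU y x) h0 h1
  linarith

/-- Convexity of `dJ` along a segment, sharpened by the term `t·u·log t` when the segment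
charges a new pair `(y₀, x₀)`: this makes the one-sided derivative at `t = 0` equal to `−∞`. -/
lemma dJ_mix_le_of_new {Q : 𝓧 → ℝ} {P : 𝓧 → 𝓨 → ℝ} {W U : 𝓨 → 𝓧 → ℝ}
    (hW : ∀ y x, 0 ≤ W y x) (hU : ∀ y x, 0 ≤ U y x) {y₀ : 𝓨} {x₀ : 𝓧} (hw : W y₀ x₀ = 0)
    {t : ℝ} (h0 : 0 < t) (h1 : t ≤ 1) :
    dJ Q P (mixJ t W U)
      ≤ (1 - t) * dJ Q P W + t * dJ Q P U + t * U y₀ x₀ * Real.log t := by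
  classical
  have e : t * U y₀ x₀ * Real.log t
      = ∑ y, ∑ x, if y = y₀ ∧ x = x₀ then t * U y₀ x₀ * Real.log t else 0 := by
    rw [Finset.sum_eq_single y₀, Finset.sum_eq_single x₀]
    · simp
    · intro x _ hx; simp [hx]
    · simp
    · intro y _ hy; simp [hy]
    · simp
  rw [e]
  unfold dJ
  simp only [Finset.mul_sum, ← Finset.sum_add_distrib]
  refine Finset.sum_le_sum fun y _ => Finset.sum_le_sum fun x _ => ?_
  split_ifs with h
  · obtain ⟨rfl, rfl⟩ := h
    simp only [mixJ, hw, mul_zero, zero_mul, zero_add, sub_zero]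
    rcases eq_or_ne (U y x) 0 with hu | hu
    · simp [hu]
    · rw [Real.log_mul h0.ne' hu]
      apply le_of_eq; ring
  · have := mul_log_mix (hW y x) (hU y x) h0.le h1
    simp only [mixJ]
    linarith

lemma continuous_dJ (Q : 𝓧 → ℝ) (P : 𝓧 → 𝓨 → ℝ) : Continuous (dJ Q P) := by
  unfold dJ
  refine continuous_finsetSum _ fun y _ => continuous_finsetSum _ fun x _ => ?_
  have h : Continuous fun W : 𝓨 → 𝓧 → ℝ => W y x := by fun_prop
  exact (Real.continuous_mul_log.comp h).sub (h.mul continuous_const)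

lemma continuous_gJ (P : 𝓧 → 𝓨 → ℝ) : Continuous (gJ P) := by
  unfold gJ
  refine continuous_finsetSum _ fun y _ => ?_
  have h : Continuous fun W : 𝓨 → 𝓧 → ℝ => ∑ x, W y x := by fun_prop
  exact (Real.continuous_mul_log.comp h).sub (by fun_prop)

/-- Gibbs' inequality `D(W‖Q∘P) ≥ 0`. -/
lemma dJ_nonneg {Q : 𝓧 → ℝ} {P : 𝓧 → 𝓨 → ℝ} (hP : IsChannel P) (hQ : IsPMF Q)
    {W : 𝓨 → 𝓧 → ℝ} (hW : Adm Q P W) : 0 ≤ dJ Q P W := by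
  have hs : ∑ y, ∑ x, (W y x - Q x * P x y) = 0 := by
    simp only [Finset.sum_sub_distrib, hW.2.1]
    rw [Finset.sum_comm]
    simp only [← Finset.mul_sum, (hP _).2, mul_one, hQ.2, sub_self]
  rw [← hs]
  unfold dJ
  refine Finset.sum_le_sum fun y _ => Finset.sum_le_sum fun x _ => ?_
  have hqp : 0 ≤ Q x * P x y := mul_nonneg (hQ.1 x) ((hP x).1 y)
  rcases eq_or_lt_of_le (hW.1 y x) with h | h
  · rw [← h]; simpa using hqp
  · obtain ⟨h1, h2⟩ := hW.2.2 y x h.ne'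
    have hpos : 0 < Q x * P x y := lt_of_le_of_ne hqp (mul_ne_zero h1 h2).symm
    have hl := Real.log_le_sub_one_of_pos (div_pos hpos h)
    rw [Real.log_div hpos.ne' h.ne'] at hl
    have := mul_le_mul_of_nonneg_left hl h.le
    have e : W y x * (Q x * P x y / W y x - 1) = Q x * P x y - W y x := by
      field_simp
    rw [e] at this
    linarith

/-! ### Translation to the extended-real divergences -/

lemma klTerm_ne_bot (s t : ℝ) : klTerm s t ≠ ⊥ := by
  unfold klTerm
  split_ifs
  · simp
  · simp
  · exact EReal.coe_ne_bot _

lemma klTerm_coe {s t : ℝ} (h : s ≠ 0 → t ≠ 0) :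
    klTerm s t = ((s * Real.log s - s * Real.log t : ℝ) : EReal) := by
  unfold klTerm
  split_ifs with h1 h2
  · simp [h1]
  · exact absurd h2 (h h1)
  · rw [Real.log_div h1 h2, mul_sub]

lemma ereal_sum_ne_bot {ι : Type*} (s : Finset ι) (f : ι → EReal) (h : ∀ i ∈ s, f i ≠ ⊥) :
    ∑ i ∈ s, f i ≠ ⊥ :=
  Finset.sum_induction f (· ≠ ⊥) (fun _ _ ha hb => EReal.add_ne_bot_iff.2 ⟨ha, hb⟩)
    (by simp) h

lemma ereal_sum_eq_top {ι : Type*} [Fintype ι] (f : ι → EReal) (h : ∀ i, f i ≠ ⊥)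
    (i : ι) (hi : f i = ⊤) : ∑ i, f i = ⊤ := by
  classical
  rw [← Finset.add_sum_erase _ _ (Finset.mem_univ i), hi]
  exact EReal.top_add_of_ne_bot (ereal_sum_ne_bot _ _ fun j _ => h j)

lemma ereal_coe_sum {ι : Type*} (s : Finset ι) (f : ι → ℝ) :
    ∑ i ∈ s, (f i : EReal) = ((∑ i ∈ s, f i : ℝ) : EReal) := by
  classical
  induction s using Finset.induction_on with
  | empty => simp
  | insert a s ha ih => rw [Finset.sum_insert ha, Finset.sum_insert ha, ih, EReal.coe_add]

lemma DQP_eq {T : 𝓨 → ℝ} {V : 𝓨 → 𝓧 → ℝ} {Q : 𝓧 → ℝ} {P : 𝓧 → 𝓨 → ℝ}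
    (h : Adm Q P fun y x => T y * V y x) :
    DQP T V Q P = (dJ Q P (fun y x => T y * V y x) : ℝ) := by
  unfold DQP dJ
  rw [← ereal_coe_sum]
  refine Finset.sum_congr rfl fun y _ => ?_
  rw [← ereal_coe_sum]
  exact Finset.sum_congr rfl fun x _ =>
    klTerm_coe fun hs => mul_ne_zero (h.2.2 y x hs).1 (h.2.2 y x hs).2

lemma DTQ_eq {T : 𝓨 → ℝ} {V : 𝓨 → 𝓧 → ℝ} {Q : 𝓧 → ℝ} {P : 𝓧 → 𝓨 → ℝ}
    (hV : IsCondPMF V) (h : Adm Q P fun y x => T y * V y x) :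
    DTQ T V Q = (dJ Q P (fun y x => T y * V y x) - gJ P (fun y x => T y * V y x) : ℝ) := by
  unfold DTQ dJ gJ
  rw [← Finset.sum_sub_distrib, ← ereal_coe_sum]
  refine Finset.sum_congr rfl fun y _ => ?_
  have e : ∑ x, T y * V y x = T y := by rw [← Finset.mul_sum, (hV y).2, mul_one]
  have e2 : T y * Real.log (T y) = ∑ x, T y * V y x * Real.log (T y) := by
    rw [← Finset.sum_mul, e]
  rw [e, e2, ← Finset.sum_sub_distrib, ← Finset.sum_sub_distrib, ← ereal_coe_sum]
  refine Finset.sum_congr rfl fun x _ => ?_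
  rw [klTerm_coe fun hs => mul_ne_zero (left_ne_zero_of_mul hs) (h.2.2 y x hs).1]
  congr 1
  by_cases hs : T y * V y x = 0
  · simp [hs]
  · obtain ⟨h1, h2⟩ := h.2.2 y x hs
    rw [Real.log_mul (left_ne_zero_of_mul hs) h1, Real.log_mul h1 h2]
    ring

lemma DQP_eq_top {T : 𝓨 → ℝ} {V : 𝓨 → 𝓧 → ℝ} {Q : 𝓧 → ℝ} {P : 𝓧 → 𝓨 → ℝ}
    (hT : IsPMF T) (hV : IsCondPMF V) (h : ¬ Adm Q P fun y x => T y * V y x) :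
    DQP T V Q P = ⊤ := by
  have h1 : ∀ y x, 0 ≤ T y * V y x := fun y x => mul_nonneg (hT.1 y) ((hV y).1 x)
  have h2 : ∑ y, ∑ x, T y * V y x = 1 := by
    simp only [← Finset.mul_sum, (hV _).2, mul_one, hT.2]
  have h3 : ∃ y x, T y * V y x ≠ 0 ∧ Q x * P x y = 0 := by
    by_contra! hc
    exact h ⟨h1, h2, fun y x hs =>
      ⟨left_ne_zero_of_mul (hc y x hs), right_ne_zero_of_mul (hc y x hs)⟩⟩
  obtain ⟨y, x, hs, ht⟩ := h3
  refine ereal_sum_eq_top _ (fun y => ereal_sum_ne_bot _ _ fun x _ => klTerm_ne_bot _ _) y ?_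
  refine ereal_sum_eq_top _ (fun x => klTerm_ne_bot _ _) x ?_
  simp only [klTerm, if_neg hs, if_pos ht]

/-- Every joint pmf disintegrates as `T∘V`; on rows of mass zero, where `V(·|y)` is arbitrary,
the pmf `Q` is used. -/
lemma exists_disint {Q : 𝓧 → ℝ} {P : 𝓧 → 𝓨 → ℝ} (hQ : IsPMF Q) {W : 𝓨 → 𝓧 → ℝ}
    (hW : Adm Q P W) : ∃ T : 𝓨 → ℝ, ∃ V : 𝓨 → 𝓧 → ℝ, IsPMF T ∧ IsCondPMF V ∧
      (fun y x => T y * V y x) = W := by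
  have hT : ∀ y, 0 ≤ ∑ x, W y x := fun y => Finset.sum_nonneg fun x _ => hW.1 y x
  refine ⟨fun y => ∑ x, W y x,
    fun y x => if ∑ a, W y a = 0 then Q x else W y x / ∑ a, W y a,
    ⟨hT, hW.2.1⟩, fun y => ?_, ?_⟩
  · by_cases h : ∑ a, W y a = 0
    · simpa only [h, if_true] using hQ
    · simp only [h, if_false]
      exact ⟨fun x => div_nonneg (hW.1 y x) (hT y), by rw [← Finset.sum_div, div_self h]⟩
  · funext y x
    by_cases h : ∑ a, W y a = 0
    · simp only [h, zero_mul]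
      exact ((Finset.sum_eq_zero_iff_of_nonneg fun x _ => hW.1 y x).1 h x
        (Finset.mem_univ x)).symm
    · simp only [h, if_false]
      field_simp

lemma Ec_le {Q : 𝓧 → ℝ} {P : 𝓧 → 𝓨 → ℝ} (hQ : IsPMF Q) {R : ℝ} {W : 𝓨 → 𝓧 → ℝ}
    (hW : Adm Q P W) (hR : R ≤ dJ Q P W - gJ P W) : Ec R Q P ≤ (dJ Q P W : ℝ) := by
  obtain ⟨T, V, hT, hV, rfl⟩ := exists_disint hQ hW
  refine sInf_le ⟨T, V, hT, hV, ?_, (DQP_eq hW).symm⟩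
  rw [DTQ_eq hV hW]
  exact_mod_cast hR

/-! ### Equality of the two exponents for a fixed `Q` -/

/-- If some admissible `W*` has `gJ W* ≤ −R`, then any admissible `W` can be replaced by a
feasible one (`D(W'‖T'×Q) ≥ R`) at cost at most `D + |R − D(W‖T×Q)|⁺ = max (D, gJ + R)`. -/
lemma exists_feasible {Q : 𝓧 → ℝ} {P : 𝓧 → 𝓨 → ℝ} (hP : IsChannel P) (hQ : IsPMF Q) {R : ℝ}
    {S W : 𝓨 → 𝓧 → ℝ} (hS : Adm Q P S) (hSR : gJ P S ≤ -R) (hW : Adm Q P W) :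
    ∃ W', Adm Q P W' ∧ R ≤ dJ Q P W' - gJ P W' ∧
      dJ Q P W' ≤ max (dJ Q P W) (gJ P W + R) := by
  rcases le_or_gt R (dJ Q P W - gJ P W) with h | h
  · exact ⟨W, hW, h, le_max_left _ _⟩
  have hd := dJ_nonneg hP hQ hW
  have hds := dJ_nonneg hP hQ hS
  have hc : Continuous fun t : ℝ => dJ Q P (mixJ t W S) - gJ P (mixJ t W S) :=
    ((continuous_dJ Q P).comp (continuous_mixJ W S)).sub
      ((continuous_gJ P).comp (continuous_mixJ W S))
  have e0 : mixJ 0 W S = W := by funext y x; simp [mixJ]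
  have e1 : mixJ 1 W S = S := by funext y x; simp [mixJ]
  -- The segment from `W` to `W*` crosses the level set `D(·‖T×Q) = R`, and `gJ` is convex
  -- along it with its larger endpoint value at `W`.
  obtain ⟨t, ⟨ht0, ht1⟩, ht⟩ := intermediate_value_Icc (zero_le_one' ℝ) hc.continuousOn
    (show R ∈ Set.Icc _ _ from ⟨by simp only [e0]; exact h.le, by simp only [e1]; linarith⟩)
  simp only at ht
  refine ⟨mixJ t W S, hW.mix hS ht0 ht1, ht.ge, le_max_of_le_right ?_⟩
  have hg := gJ_mix_le (P := P) hW.1 hS.1 ht0 ht1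
  have : t * gJ P S ≤ t * gJ P W := mul_le_mul_of_nonneg_left (by linarith) ht0
  linarith

lemma Ec_le_EcML {Q : 𝓧 → ℝ} {P : 𝓧 → 𝓨 → ℝ} (hP : IsChannel P) (hQ : IsPMF Q) {R : ℝ}
    {S : 𝓨 → 𝓧 → ℝ} (hS : Adm Q P S) (hSR : gJ P S ≤ -R) : Ec R Q P ≤ EcML R Q P := by
  refine le_sInf ?_
  rintro v ⟨T, V, hT, hV, rfl⟩
  by_cases hA : Adm Q P fun y x => T y * V y x
  · obtain ⟨W', hW', hR', hle⟩ := exists_feasible hP hQ hS hSR hA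
    refine (Ec_le hQ hW' hR').trans ?_
    rw [DQP_eq hA, DTQ_eq hV hA]
    set d := dJ Q P fun y x => T y * V y x
    set g := gJ P fun y x => T y * V y x
    have e : max d (g + R) = d + max (R - (d - g)) 0 := by
      rw [← max_add_add_left, max_comm]
      congr 1 <;> ring
    rw [e] at hle
    have hm : max ((R : EReal) - ((d - g : ℝ) : EReal)) 0 = ((max (R - (d - g)) 0 : ℝ) : EReal) := by
      rw [← EReal.coe_sub, ← EReal.coe_zero]
      exact (EReal.coe_strictMono.monotone.map_max).symm
    rw [hm, ← EReal.coe_add]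
    exact_mod_cast hle
  · rw [DQP_eq_top hT hV hA, EReal.top_add_of_ne_bot]
    · exact le_top
    · exact ne_bot_of_le_ne_bot EReal.zero_ne_bot (le_max_right _ _)

/-! ### Support of the optimal joint distribution -/

lemma Adm_prod {Q Q' : 𝓧 → ℝ} {P : 𝓧 → 𝓨 → ℝ} (hP : IsChannel P) (hQ' : IsPMF Q')
    (h : ∀ x, Q' x ≠ 0 → Q x ≠ 0) : Adm Q P fun y x => Q' x * P x y := by
  refine ⟨fun y x => mul_nonneg (hQ'.1 x) ((hP x).1 y), ?_, fun y x hs =>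
    ⟨h x (left_ne_zero_of_mul hs), right_ne_zero_of_mul hs⟩⟩
  rw [Finset.sum_comm]
  simp only [← Finset.mul_sum, (hP _).2, mul_one, hQ'.2]

/-- A minimizer `W` of the convex function `max (D, gJ + R)` with `gJ W > −R` uses every letter
of `supp Q`: otherwise a small step towards a mixture of `W*` and `Q∘P` decreases both
`gJ` (towards `W*`) and `D` (infinite slope at the unused letter). -/
lemma full_support {Q : 𝓧 → ℝ} {P : 𝓧 → 𝓨 → ℝ} (hP : IsChannel P) (hQ : IsPMF Q) {R : ℝ}
    {S W : 𝓨 → 𝓧 → ℝ} (hS : Adm Q P S) (hSR : gJ P S ≤ -R) (hW : Adm Q P W)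
    (hgd : gJ P W + R ≤ dJ Q P W)
    (hmin : ∀ W', Adm Q P W' → dJ Q P W ≤ max (dJ Q P W') (gJ P W' + R))
    (hg : -R < gJ P W) (x : 𝓧) (hx : Q x ≠ 0) : ∃ y, W y x ≠ 0 := by
  by_contra! hc
  obtain ⟨y, hy⟩ : ∃ y, P x y ≠ 0 := by
    by_contra! h
    have := (hP x).2
    simp [h] at this
  set B : 𝓨 → 𝓧 → ℝ := fun y x => Q x * P x y with hB
  have hBA : Adm Q P B := Adm_prod hP hQ fun _ h => h
  obtain ⟨ε, hε0, hε1, hε⟩ : ∃ ε : ℝ, 0 < ε ∧ ε ≤ 1 ∧ gJ P (mixJ ε S B) < gJ P W := by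
    have hcont : Continuous fun t : ℝ => gJ P (mixJ t S B) :=
      (continuous_gJ P).comp (continuous_mixJ S B)
    have e0 : mixJ 0 S B = S := by funext y x; simp [mixJ]
    have h0 : ∀ᶠ t : ℝ in 𝓝 0, gJ P (mixJ t S B) < gJ P W :=
      hcont.continuousAt.eventually_lt continuousAt_const (by rw [e0]; linarith)
    have h1 : ∀ᶠ t : ℝ in 𝓝[>] 0, 0 < t := self_mem_nhdsWithin
    have h2 : ∀ᶠ t : ℝ in 𝓝 0, t ≤ 1 := eventually_le_nhds one_pos
    obtain ⟨t, ht⟩ := (h1.and ((h2.and h0).filter_mono nhdsWithin_le_nhds)).exists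
    exact ⟨t, ht.1, ht.2.1, ht.2.2⟩
  set U := mixJ ε S B with hU
  have hUA : Adm Q P U := hS.mix hBA hε0.le hε1
  have hBpos : 0 < B y x := lt_of_le_of_ne (hBA.1 y x) (mul_ne_zero hx hy).symm
  have hu : 0 < U y x := by
    have h1 := mul_nonneg (sub_nonneg.2 hε1) (hS.1 y x)
    have h2 := mul_pos hε0 hBpos
    simp only [hU, mixJ]
    linarith
  obtain ⟨t, ht0, ht1, ht⟩ : ∃ t : ℝ, 0 < t ∧ t ≤ 1 ∧
      dJ Q P U - dJ Q P W + U y x * Real.log t < 0 := by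
    have hl : Tendsto (fun t => dJ Q P U - dJ Q P W + U y x * Real.log t) (𝓝[>] 0) atBot :=
      tendsto_atBot_add_const_left _ _ (Real.tendsto_log_nhdsGT_zero.const_mul_atBot hu)
    have h1 : ∀ᶠ t : ℝ in 𝓝[>] 0, 0 < t := self_mem_nhdsWithin
    have h2 : ∀ᶠ t : ℝ in 𝓝 0, t ≤ 1 := eventually_le_nhds one_pos
    obtain ⟨t, ht⟩ := (h1.and ((h2.filter_mono nhdsWithin_le_nhds).and
      (hl.eventually_lt_atBot 0))).exists
    exact ⟨t, ht.1, ht.2.1, ht.2.2⟩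
  have hd := dJ_mix_le_of_new (Q := Q) (P := P) hW.1 hUA.1 (hc y) ht0 ht1
  have hgm := gJ_mix_le (P := P) hW.1 hUA.1 ht0.le ht1
  have hd' := mul_neg_of_pos_of_neg ht0 ht
  have hg' := mul_neg_of_pos_of_neg ht0 (sub_neg.2 hε)
  rcases le_max_iff.1 (hmin _ (hW.mix hUA ht0.le ht1)) with h | h
  · linarith
  · linarith

/-! ### The capacity -/

lemma MI_eq {Q' : 𝓧 → ℝ} {P : 𝓧 → 𝓨 → ℝ} (hP : IsChannel P) (hQ' : IsPMF Q') :
    MI Q' P = -gJ P fun y x => Q' x * P x y := by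
  unfold MI gJ
  rw [Finset.sum_comm, ← Finset.sum_neg_distrib]
  refine Finset.sum_congr rfl fun y _ => ?_
  rw [Finset.sum_mul, ← Finset.sum_sub_distrib, ← Finset.sum_neg_distrib]
  refine Finset.sum_congr rfl fun x _ => ?_
  split_ifs with h
  · simp [h]
  · have hpos : 0 < ∑ a, Q' a * P a y :=
      Finset.sum_pos' (fun a _ => mul_nonneg (hQ'.1 a) ((hP a).1 y))
        ⟨x, Finset.mem_univ x, lt_of_le_of_ne (mul_nonneg (hQ'.1 x) ((hP x).1 y)) (Ne.symm h)⟩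
    rw [Real.log_div (right_ne_zero_of_mul h) hpos.ne']
    ring

/-- The capacity-achieving input on `supp Q` (it exists by compactness) yields a joint pmf
`W* = Q'∘P` with `gJ W* = −C(supp Q) ≤ −R`. -/
lemma exists_start {Q : 𝓧 → ℝ} {P : 𝓧 → 𝓨 → ℝ} (hP : IsChannel P) (hQ : IsPMF Q) {R : ℝ}
    (hR : R ≤ capacity P {x | 0 < Q x}) : ∃ S, Adm Q P S ∧ gJ P S ≤ -R := by
  set K : Set (𝓧 → ℝ) := stdSimplex ℝ 𝓧 ∩ {q | ∀ x, Q x = 0 → q x = 0} with hK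
  have hKc : IsCompact K := by
    refine (isCompact_stdSimplex ℝ 𝓧).inter_right ?_
    simp only [Set.ofPred_forall]
    exact isClosed_iInter fun x => isClosed_iInter fun _ =>
      isClosed_eq (continuous_apply x) continuous_const
  have hcont : Continuous fun q : 𝓧 → ℝ => gJ P fun y x => q x * P x y :=
    (continuous_gJ P).comp (by fun_prop)
  obtain ⟨q, hq, hqm⟩ := hKc.exists_isMinOn ⟨Q, ⟨hQ.1, hQ.2⟩, fun _ h => h⟩ hcont.continuousOn
  refine ⟨fun y x => q x * P x y,
    Adm_prod hP ⟨hq.1.1, hq.1.2⟩ fun x h h' => h (hq.2 x h'), ?_⟩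
  have hle : capacity P {x | 0 < Q x} ≤ -gJ P fun y x => q x * P x y := by
    refine csSup_le ⟨_, Q, hQ, fun x h => h, rfl⟩ ?_
    rintro c ⟨Q', hQ', hs, rfl⟩
    rw [MI_eq hP hQ']
    refine neg_le_neg (hqm ⟨⟨hQ'.1, hQ'.2⟩, fun x hx => ?_⟩)
    by_contra hne
    exact (hs x (lt_of_le_of_ne (hQ'.1 x) (Ne.symm hne))).ne' hx
  linarith

/-! ### The induction step -/

/-- The condition `∃ W*` with `gJ W* ≤ −R` passes from `Q` to the `𝓧`-marginal of an optimal
pair: either the optimal `W` satisfies it itself, or `W` has full support and the old `W*`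
is still admissible. -/
lemma start_step {Q : 𝓧 → ℝ} {P : 𝓧 → 𝓨 → ℝ} (hP : IsChannel P) (hQ : IsPMF Q) {R : ℝ}
    {S : 𝓨 → 𝓧 → ℝ} (hS : Adm Q P S) (hSR : gJ P S ≤ -R) {T : 𝓨 → ℝ} {V : 𝓨 → 𝓧 → ℝ}
    (hT : IsPMF T) (hV : IsCondPMF V) (hfeas : (R : EReal) ≤ DTQ T V Q)
    (hopt : DQP T V Q P = Ec R Q P) :
    ∃ S', Adm (fun x => ∑ y, T y * V y x) P S' ∧ gJ P S' ≤ -R := by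
  have hA : Adm Q P fun y x => T y * V y x := by
    by_contra h
    have h1 := Ec_le (R := R) hQ hS (by linarith [dJ_nonneg hP hQ hS])
    rw [← hopt, DQP_eq_top hT hV h, top_le_iff] at h1
    exact EReal.coe_ne_top _ h1
  have hmarg : ∀ y x, T y * V y x ≠ 0 → ∑ y, T y * V y x ≠ 0 := fun y x h h0 =>
    h ((Finset.sum_eq_zero_iff_of_nonneg fun y _ => hA.1 y x).1 h0 y (Finset.mem_univ y))
  rcases le_or_gt (gJ P fun y x => T y * V y x) (-R) with hg | hg
  · exact ⟨_, ⟨hA.1, hA.2.1, fun y x h => ⟨hmarg y x h, (hA.2.2 y x h).2⟩⟩, hg⟩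
  · rw [DTQ_eq hV hA] at hfeas
    have hfeas' : R ≤ _ := EReal.coe_le_coe_iff.1 hfeas
    rw [DQP_eq hA] at hopt
    have hfull := full_support hP hQ hS hSR hA (by linarith) (fun W' hW' => by
      obtain ⟨W₂, h2, hR2, hle⟩ := exists_feasible hP hQ hS hSR hW'
      have := Ec_le hQ h2 hR2
      rw [← hopt] at this
      exact (EReal.coe_le_coe_iff.1 this).trans hle) hg
    refine ⟨S, ⟨hS.1, hS.2.1, fun y x h => ⟨?_, (hS.2.2 y x h).2⟩⟩, hSR⟩
    obtain ⟨y', hy'⟩ := hfull x (hS.2.2 y x h).1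
    exact hmarg y' x hy'

end Aux

theorem stmt_16 {𝓧 𝓨 : Type*} [Fintype 𝓧] [Fintype 𝓨] [Nonempty 𝓧] [Nonempty 𝓨]
    (P : 𝓧 → 𝓨 → ℝ) (hP : IsChannel P) (R : ℝ) (hR0 : 0 ≤ R)
    (Qs : ℕ → 𝓧 → ℝ) (Ts : ℕ → 𝓨 → ℝ) (Vs : ℕ → 𝓨 → 𝓧 → ℝ)
    (hQ0 : IsPMF (Qs 0))
    (hRC : R ≤ capacity P {x | 0 < Qs 0 x})
    (hTs : ∀ ℓ, IsPMF (Ts ℓ)) (hVs : ∀ ℓ, IsCondPMF (Vs ℓ))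
    (hmin : ∀ ℓ, (R : EReal) ≤ DTQ (Ts ℓ) (Vs ℓ) (Qs ℓ)
      ∧ DQP (Ts ℓ) (Vs ℓ) (Qs ℓ) P = Ec R (Qs ℓ) P)
    (hrec : ∀ ℓ x, Qs (ℓ + 1) x = ∑ y, Ts ℓ y * Vs ℓ y x) :
    ∀ ℓ, Ec R (Qs ℓ) P = EcML R (Qs ℓ) P
      ∧ DQP (Ts ℓ) (Vs ℓ) (Qs ℓ) P
          + max ((R : EReal) - DTQ (Ts ℓ) (Vs ℓ) (Qs ℓ)) 0 = EcML R (Qs ℓ) P := by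
  have key : ∀ ℓ, IsPMF (Qs ℓ) ∧ ∃ S, Adm (Qs ℓ) P S ∧ gJ P S ≤ -R := by
    intro ℓ
    induction ℓ with
    | zero => exact ⟨hQ0, exists_start hP hQ0 hRC⟩
    | succ k ih =>
      obtain ⟨hQ, S, hS, hSR⟩ := ih
      have e : Qs (k + 1) = fun x => ∑ y, Ts k y * Vs k y x := funext (hrec k)
      rw [e]
      refine ⟨⟨fun x => Finset.sum_nonneg fun y _ =>
        mul_nonneg ((hTs k).1 y) ((hVs k y).1 x), ?_⟩,
        start_step hP hQ hS hSR (hTs k) (hVs k) (hmin k).1 (hmin k).2⟩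
      rw [Finset.sum_comm]
      simp only [← Finset.mul_sum, (hVs k _).2, mul_one, (hTs k).2]
  intro ℓ
  obtain ⟨hQ, S, hS, hSR⟩ := key ℓ
  obtain ⟨hf, ho⟩ := hmin ℓ
  have hpen : max ((R : EReal) - DTQ (Ts ℓ) (Vs ℓ) (Qs ℓ)) 0 = 0 :=
    max_eq_right (EReal.sub_nonpos.2 hf)
  have heq : Ec R (Qs ℓ) P = EcML R (Qs ℓ) P := by
    refine le_antisymm (Ec_le_EcML hP hQ hS hSR) ?_
    refine sInf_le ⟨Ts ℓ, Vs ℓ, hTs ℓ, hVs ℓ, ?_⟩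
    rw [hpen, add_zero, ho]
  exact ⟨heq, by rw [hpen, add_zero, ho, heq]⟩
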